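/- Let f : E → ℝ be convex and differentiable with locally Lipschitz gradient ∇f, g : E → ℝ convex, Φ := f + g, and assume Φ attains its minimum on E. Let θ ∈ [1,2], α ∈ (0, √2 − 1), λ_max > 0. Let (x_n)_{n≥0}, (y_n)_{n≥0} be sequences in E and (λ_n)_{n≥0}, (θ_n)_{n≥1} positive reals with θ_0 := 1 such that for all n ≥ 1: 0 < λ_n ≤ λ_max, λ_n = (2 − 1/θ)·θ_n·λ_{n−1}, θ_n² ≤ (1 + θ·θ_{n−1})/(2θ − 1), θ_n ≤ 2, y_n = x_n + θ_n·(x_n − x_{n−1}), λ_n·‖∇f(y_n) − ∇f(y_{n−1})‖ ≤ α·(2 − 1/θ)·‖y_n − y_{n−1}‖, and for all n ≥ 0, x_{n+1} is the minimizer over E of z ↦ λ_n·g(z) + (1/2)·‖z − (x_n − λ_n·∇f(y_n))‖². Assume moreover that limsup λ_n > 0. Then (x_n) and (y_n) converge to a minimizer of Φ. -/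

import Mathlib

open scoped RealInnerProductSpace

lemma grad_ineq {E : Type*} [NormedAddCommGroup E] [InnerProductSpace ℝ E] [CompleteSpace E]
    (f : E → ℝ) (hf : ConvexOn ℝ Set.univ f) (y d : E) (hd : HasGradientAt f d y) (z : E) :
    ⟪d, z - y⟫ ≤ f z - f y := by
  have h1 : HasDerivAt (fun t : ℝ => y + t • (z - y)) (z - y) 0 := by
    simpa using ((hasDerivAt_id (0:ℝ)).smul_const (z - y)).const_add y
  have h2 : HasFDerivAt f (InnerProductSpace.toDual ℝ E d) (y + (0:ℝ) • (z - y)) := by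
    simpa using hd.hasFDerivAt
  have h3 := h2.comp_hasDerivAt (0:ℝ) h1
  rw [InnerProductSpace.toDual_apply_apply] at h3
  have h4 := h3.tendsto_slope_zero_right
  refine le_of_tendsto h4 ?_
  have : Set.Ioo (0:ℝ) 1 ∈ nhdsWithin (0:ℝ) (Set.Ioi 0) := Ioo_mem_nhdsGT one_pos
  filter_upwards [this] with t ht
  have hc := hf.2 (Set.mem_univ y) (Set.mem_univ z) (by linarith [ht.2] : 0 ≤ 1 - t) ht.1.le (by ring)
  have e : (1 - t) • y + t • z = y + t • (z - y) := by
    rw [sub_smul, smul_sub, one_smul]; abel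
  rw [e] at hc
  simp only [smul_eq_mul, Function.comp, zero_add, zero_smul, add_zero] at hc ⊢
  rw [inv_mul_le_iff₀ ht.1]
  linarith

lemma prox_ineq {E : Type*} [NormedAddCommGroup E] [InnerProductSpace ℝ E]
    (g : E → ℝ) (hg : ConvexOn ℝ Set.univ g) (l : ℝ) (hl : 0 < l) (p w : E)
    (h : ∀ z : E, l * g p + (1 / 2) * ‖p - w‖ ^ 2 ≤ l * g z + (1 / 2) * ‖z - w‖ ^ 2) (z : E) :
    l * (g p - g z) ≤ ⟪p - w, z - p⟫ := by
  have key : ∀ t ∈ Set.Ioo (0:ℝ) 1,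
      l * (g p - g z) - ⟪p - w, z - p⟫ ≤ t * (‖z - p‖ ^ 2 / 2) := by
    intro t ht
    have hc := hg.2 (Set.mem_univ p) (Set.mem_univ z) (by linarith [ht.2] : 0 ≤ 1 - t) ht.1.le (by ring)
    have e : (1 - t) • p + t • z = p + t • (z - p) := by
      rw [sub_smul, smul_sub, one_smul]; abel
    rw [e] at hc
    have h1 := h (p + t • (z - p))
    have e2 : p + t • (z - p) - w = (p - w) + t • (z - p) := by abel
    rw [e2, norm_add_sq_real, inner_smul_right, norm_smul, mul_pow, Real.norm_eq_abs, sq_abs] at h1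
    simp only [smul_eq_mul] at hc
    have h2 := mul_le_mul_of_nonneg_left hc hl.le
    refine le_of_mul_le_mul_left ?_ ht.1
    nlinarith
  have h4 : Filter.Tendsto (fun t : ℝ => t * (‖z - p‖ ^ 2 / 2)) (nhdsWithin 0 (Set.Ioi 0)) (nhds 0) := by
    have : Continuous (fun t : ℝ => t * (‖z - p‖ ^ 2 / 2)) := by fun_prop
    have := this.tendsto 0
    rw [zero_mul] at this
    exact this.mono_left nhdsWithin_le_nhds
  have : l * (g p - g z) - ⟪p - w, z - p⟫ ≤ 0 := by
    refine ge_of_tendsto h4 ?_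
    filter_upwards [Ioo_mem_nhdsGT (one_pos : (0:ℝ) < 1)] with t ht using key t ht
  linarith

/-- one step, algebraic form -/
lemma step_ineq {E : Type*} [NormedAddCommGroup E] [InnerProductSpace ℝ E]
    (u v w a b : E) (l0 l1 t T f0 f1 fs fy g0 g1 g2 gs : ℝ)
    (hl1 : 0 < l1) (ht : 0 < t) (hT : 1 ≤ T)
    (hl : (2 * T - 1) * t * l0 = T * l1)
    (P1 : l1 * (g2 - gs) ≤ ⟪v + l1 • b, w⟫)
    (P2 : l1 * (g2 - g1) ≤ ⟪v + l1 • b, -v⟫)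
    (P3 : l0 * (g1 - g2) ≤ ⟪u + l0 • a, v⟫)
    (P4 : l0 * (g1 - g0) ≤ ⟪u + l0 • a, -u⟫)
    (F1 : ⟪b, w + v - t • u⟫ ≤ fs - fy)
    (F2 : ⟪b, - (t • u)⟫ ≤ f1 - fy)
    (F3 : (1 + t) * f1 - t * f0 ≤ fy) :
    2 * l1 * ((1 + T * t) * (f1 + g1 - (fs + gs)) - T * t * (f0 + g0 - (fs + gs))) ≤
      ‖v + w‖ ^ 2 - ‖w‖ ^ 2 - (2 * T - 1) * (‖t • u‖ ^ 2 + ‖v - t • u‖ ^ 2)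
        + 2 * (T * l1 * (‖b - a‖ * ‖v - t • u‖)) := by
  have Er : -(‖b - a‖ * ‖v - t • u‖) ≤ ⟪b - a, v - t • u⟫ :=
    neg_le_of_abs_le (abs_real_inner_le_norm _ _)
  have Er' := mul_le_mul_of_nonneg_left Er (by positivity : 0 ≤ T * l1)
  have hT1 : 0 ≤ T - 1 := by linarith
  have P2' := mul_le_mul_of_nonneg_left P2 hT1
  have P3' := mul_le_mul_of_nonneg_left P3 (by nlinarith : 0 ≤ (2 * T - 1) * t)
  have P4' := mul_le_mul_of_nonneg_left P4 (by nlinarith [mul_pos ht ht] : 0 ≤ (2 * T - 1) * t * t)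
  have F1' := mul_le_mul_of_nonneg_left F1 hl1.le
  have F2' := mul_le_mul_of_nonneg_left F2 (by positivity : 0 ≤ l1 * (T - 1))
  have F3' := mul_le_mul_of_nonneg_left F3 (by positivity : 0 ≤ l1 * T)
  rw [norm_add_sq_real, norm_sub_sq_real, norm_smul, mul_pow, Real.norm_eq_abs, sq_abs]
  simp only [inner_add_left, inner_add_right, inner_sub_left, inner_sub_right, inner_neg_right,
    real_inner_smul_left, real_inner_smul_right, real_inner_self_eq_norm_sq] at *
  rw [real_inner_comm u v] at *
  linear_combination 2 * P1 + 2 * P2' + 2 * P3' + 2 * P4' + 2 * F1' + 2 * F2' + 2 * F3' + 2 * Er' + (2 * (⟪a, v⟫ - t * ⟪a, u⟫ - (g1 - g2) - t * (g1 - g0))) * hl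

lemma scal_ineq (s p q b : ℝ) (hs : s ^ 2 = 2) (hs1 : 1 ≤ s) :
    2 * ((p + q) * b) ≤ (1 + s) * p ^ 2 + s * b ^ 2 + q ^ 2 := by
  have h1 : 0 ≤ (s - 1) * ((s + 1) * p - b) ^ 2 := mul_nonneg (by linarith) (sq_nonneg _)
  have h2 : (s - 1) * ((s + 1) * p - b) ^ 2 = (s + 1) * p ^ 2 - 2 * p * b + (s - 1) * b ^ 2 := by
    linear_combination ((s + 1) * p ^ 2 - 2 * p * b) * hs
  nlinarith [sq_nonneg (q - b)]

/-- The Lyapunov function. -/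
noncomputable def lyap {E : Type*} [NormedAddCommGroup E] (Φ : E → ℝ) (th α : ℝ) (x y : ℕ → E)
    (lam θ : ℕ → ℝ) (s : E) (n : ℕ) : ℝ :=
  ‖s - x (n + 1)‖ ^ 2 + (2 * th - 1) * α * ‖x (n + 1) - y n‖ ^ 2
    + 2 * lam n * (1 + th * θ n) * (Φ (x n) - Φ s)

lemma lyap_step
    {E : Type*} [NormedAddCommGroup E] [InnerProductSpace ℝ E] [FiniteDimensional ℝ E]
    (f : E → ℝ) (hf : ConvexOn ℝ Set.univ f)
    (f' : E → E) (hf' : ∀ z : E, HasGradientAt f (f' z) z)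
    (g : E → ℝ) (hg : ConvexOn ℝ Set.univ g)
    (Φ : E → ℝ) (hΦ : ∀ z : E, Φ z = f z + g z)
    (th : ℝ) (hth : th ∈ Set.Icc (1 : ℝ) 2)
    (α : ℝ) (hα : α ∈ Set.Ioo 0 (Real.sqrt 2 - 1))
    (x y : ℕ → E) (lam θ : ℕ → ℝ)
    (hlampos : ∀ n, 0 < lam n) (hθpos : ∀ n, 1 ≤ n → 0 < θ n)
    (hlamrec : ∀ n, 1 ≤ n → lam n = (2 - 1 / th) * θ n * lam (n - 1))
    (hθrec : ∀ n, 1 ≤ n → θ n ^ 2 ≤ (1 + th * θ (n - 1)) / (2 * th - 1))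
    (hy : ∀ n, 1 ≤ n → y n = x n + θ n • (x n - x (n - 1)))
    (hls : ∀ n, 1 ≤ n →
      lam n * ‖f' (y n) - f' (y (n - 1))‖ ≤ α * (2 - 1 / th) * ‖y n - y (n - 1)‖)
    (hprox : ∀ n : ℕ, ∀ z : E,
      lam n * g (x (n + 1)) + (1 / 2) * ‖x (n + 1) - (x n - lam n • f' (y n))‖ ^ 2 ≤
        lam n * g z + (1 / 2) * ‖z - (x n - lam n • f' (y n))‖ ^ 2)
    (s : E) (hs : ∀ z, Φ s ≤ Φ z) (n : ℕ) :
    lyap Φ th α x y lam θ s (n + 1) + (1 - α * (1 + Real.sqrt 2)) *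
      (‖y (n + 1) - x (n + 1)‖ ^ 2 + ‖x (n + 2) - y (n + 1)‖ ^ 2) ≤ lyap Φ th α x y lam θ s n := by
  have P := fun n z => prox_ineq g hg (lam n) (hlampos n) _ _ (hprox n) z
  have hT := hth.1
  have hT0 : th ≠ 0 := by linarith
  have hn : 1 ≤ n + 1 := by omega
  have ht := hθpos (n + 1) hn
  have hl1 := hlampos (n + 1)
  have hl0 := hlampos n
  have hlr := hlamrec (n + 1) hn
  have htr := hθrec (n + 1) hn
  have hy1 := hy (n + 1) hn
  have hls1 := hls (n + 1) hn
  simp only [Nat.add_sub_cancel] at hlr htr hy1 hls1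
  have hk : th * (2 - 1 / th) = 2 * th - 1 := by field_simp
  have hl : (2 * th - 1) * θ (n + 1) * lam n = th * lam (n + 1) := by
    rw [hlr, ← hk]; ring
  set t := θ (n + 1) with htdef
  set l1 := lam (n + 1)
  set l0 := lam n
  have e1 : x (n + 2) - (x (n + 1) - l1 • f' (y (n + 1)))
      = (x (n + 2) - x (n + 1)) + l1 • f' (y (n + 1)) := by abel
  have e0 : x (n + 1) - (x n - l0 • f' (y n)) = (x (n + 1) - x n) + l0 • f' (y n) := by abel
  have P1 := P (n + 1) s
  have P2 := P (n + 1) (x (n + 1))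
  have P3 := P n (x (n + 2))
  have P4 := P n (x n)
  rw [show n + 1 + 1 = n + 2 from rfl, e1] at P1 P2
  rw [e0] at P3 P4
  rw [← neg_sub (x (n + 2)) (x (n + 1))] at P2
  rw [← neg_sub (x (n + 1)) (x n)] at P4
  have F1 := grad_ineq f hf _ _ (hf' (y (n + 1))) s
  have F2 := grad_ineq f hf _ _ (hf' (y (n + 1))) (x (n + 1))
  rw [show s - y (n + 1) = (s - x (n + 2)) + (x (n + 2) - x (n + 1)) - t • (x (n + 1) - x n) by
    rw [hy1]; abel] at F1
  rw [show x (n + 1) - y (n + 1) = -(t • (x (n + 1) - x n)) by rw [hy1]; abel] at F2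
  have F3 : (1 + t) * f (x (n + 1)) - t * f (x n) ≤ f (y (n + 1)) := by
    have hc := hf.2 (Set.mem_univ (y (n + 1))) (Set.mem_univ (x n))
      (by positivity : 0 ≤ 1 / (1 + t)) (by positivity : 0 ≤ t / (1 + t)) (by field_simp)
    have e : (1 / (1 + t)) • y (n + 1) + (t / (1 + t)) • x n = x (n + 1) := by
      have h1 : (1 + t) • x (n + 1) = y (n + 1) + t • x n := by
        rw [hy1, smul_sub, add_smul, one_smul]; abel
      rw [div_eq_inv_mul, div_eq_inv_mul, mul_smul, mul_smul, ← smul_add, one_smul, ← h1,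
        smul_smul, inv_mul_cancel₀ (by positivity), one_smul]
    rw [e] at hc
    simp only [smul_eq_mul] at hc
    have := mul_le_mul_of_nonneg_left hc (by positivity : 0 ≤ 1 + t)
    have e2 : (1 + t) * (1 / (1 + t) * f (y (n + 1)) + t / (1 + t) * f (x n))
      = f (y (n + 1)) + t * f (x n) := by field_simp
    linarith
  have S := step_ineq _ _ _ _ _ l0 l1 t th _ _ _ _ _ _ _ _ hl1 ht hT hl P1 P2 P3 P4 F1 F2 F3
  rw [show (x (n + 2) - x (n + 1)) + (s - x (n + 2)) = s - x (n + 1) by abel,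
    show (x (n + 2) - x (n + 1)) - t • (x (n + 1) - x n) = x (n + 2) - y (n + 1) by
      rw [hy1]; abel,
    show t • (x (n + 1) - x n) = y (n + 1) - x (n + 1) by rw [hy1]; abel,
    ← hΦ, ← hΦ, ← hΦ] at S
  have tri : ‖y (n + 1) - y n‖ ≤ ‖y (n + 1) - x (n + 1)‖ + ‖x (n + 1) - y n‖ := by
    simpa using norm_add_le (y (n + 1) - x (n + 1)) (x (n + 1) - y n)
  set p := ‖y (n + 1) - x (n + 1)‖
  set q := ‖x (n + 1) - y n‖
  set b := ‖x (n + 2) - y (n + 1)‖ with hb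
  have hb0 : 0 ≤ b := norm_nonneg _
  have s2 : Real.sqrt 2 ^ 2 = 2 := Real.sq_sqrt (by norm_num)
  have s1 : 1 ≤ Real.sqrt 2 := Real.one_le_sqrt.2 (by norm_num)
  have hα0 := hα.1
  have hα1 := hα.2
  have hc : 1 ≤ 2 * th - 1 := by linarith
  have G1 : th * l1 * ‖f' (y (n + 1)) - f' (y n)‖ ≤ (2 * th - 1) * α * (p + q) := by
    calc _ = th * (l1 * ‖f' (y (n + 1)) - f' (y n)‖) := by ring
      _ ≤ th * (α * (2 - 1 / th) * ‖y (n + 1) - y n‖) :=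
        mul_le_mul_of_nonneg_left hls1 (by linarith)
      _ = (2 * th - 1) * α * ‖y (n + 1) - y n‖ := by rw [← hk]; ring
      _ ≤ _ := mul_le_mul_of_nonneg_left tri (by positivity)
  have G2 := mul_le_mul_of_nonneg_right G1 hb0
  have G3 := mul_le_mul_of_nonneg_left (scal_ineq _ p q b s2 s1)
    (by positivity : 0 ≤ (2 * th - 1) * α)
  have hε : 0 ≤ 1 - α * (1 + Real.sqrt 2) := by nlinarith
  have G4 := mul_le_mul_of_nonneg_right hc
    (by positivity : 0 ≤ (1 - α * (1 + Real.sqrt 2)) * (p ^ 2 + b ^ 2))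
  have hφ : 0 ≤ Φ (x n) - Φ s := by linarith [hs (x n)]
  have htr' : t ^ 2 * (2 * th - 1) ≤ 1 + th * θ n := (le_div_iff₀ (by linarith)).1 htr
  have G5 : l1 * (th * t) ≤ l0 * (1 + th * θ n) := by
    have : l1 * (th * t) = l0 * (t ^ 2 * (2 * th - 1)) := by linear_combination -t * hl
    rw [this]
    exact mul_le_mul_of_nonneg_left htr' hl0.le
  have G6 := mul_le_mul_of_nonneg_right G5 hφ
  unfold lyap
  rw [show n + 1 + 1 = n + 2 from rfl, ← hb, ← htdef]
  linarith


/-- Convergence of Algorithm 3 (Theorem 3.3 of the paper). -/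
theorem alg3_converges
    {E : Type*} [NormedAddCommGroup E] [InnerProductSpace ℝ E] [FiniteDimensional ℝ E]
    (f : E → ℝ) (hf : ConvexOn ℝ Set.univ f)
    (f' : E → E) (hf' : ∀ z : E, HasGradientAt f (f' z) z) (hf'lip : LocallyLipschitz f')
    (g : E → ℝ) (hg : ConvexOn ℝ Set.univ g)
    (Φ : E → ℝ) (hΦ : ∀ z : E, Φ z = f z + g z)
    (hmin : ∃ m : E, ∀ z : E, Φ m ≤ Φ z)
    (th : ℝ) (hth : th ∈ Set.Icc (1 : ℝ) 2)
    (α : ℝ) (hα : α ∈ Set.Ioo 0 (Real.sqrt 2 - 1))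
    (lamMax : ℝ) (hmax : 0 < lamMax)
    (x y : ℕ → E) (lam θ : ℕ → ℝ)
    (hlampos : ∀ n, 0 < lam n) (hθ0 : θ 0 = 1) (hθpos : ∀ n, 1 ≤ n → 0 < θ n)
    (hlammax : ∀ n, 1 ≤ n → lam n ≤ lamMax)
    (hlamrec : ∀ n, 1 ≤ n → lam n = (2 - 1 / th) * θ n * lam (n - 1))
    (hθrec : ∀ n, 1 ≤ n → θ n ^ 2 ≤ (1 + th * θ (n - 1)) / (2 * th - 1))
    (hθle : ∀ n, 1 ≤ n → θ n ≤ 2)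
    (hy : ∀ n, 1 ≤ n → y n = x n + θ n • (x n - x (n - 1)))
    (hls : ∀ n, 1 ≤ n →
      lam n * ‖f' (y n) - f' (y (n - 1))‖ ≤ α * (2 - 1 / th) * ‖y n - y (n - 1)‖)
    (hprox : ∀ n : ℕ, ∀ z : E,
      lam n * g (x (n + 1)) + (1 / 2) * ‖x (n + 1) - (x n - lam n • f' (y n))‖ ^ 2 ≤
        lam n * g z + (1 / 2) * ‖z - (x n - lam n • f' (y n))‖ ^ 2)
    (hlimsup : 0 < Filter.limsup lam Filter.atTop) :
    ∃ xs : E, (∀ z : E, Φ xs ≤ Φ z) ∧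
      Filter.Tendsto x Filter.atTop (nhds xs) ∧
      Filter.Tendsto y Filter.atTop (nhds xs) := by
  have hlamF : ∃ δ > 0, ∃ᶠ n in Filter.atTop, δ < lam n := by
    refine ⟨Filter.limsup lam Filter.atTop / 2, by linarith, ?_⟩
    refine Filter.frequently_lt_of_lt_limsup ?_ (by linarith)
    exact Filter.IsBoundedUnder.isCoboundedUnder_le
      (Filter.isBoundedUnder_of ⟨0, fun n => (hlampos n).le⟩)
  have key := lyap_step f hf f' hf' g hg Φ hΦ th hth α hα x y lam θ hlampos hθpos hlamrec hθrec
    hy hls hprox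
  have hθpos' : ∀ n, 0 < θ n := by
    intro n
    rcases Nat.eq_zero_or_pos n with h | h
    · rw [h, hθ0]; norm_num
    · exact hθpos n h
  have hT := hth.1
  have hα0 := hα.1
  have hα1 := hα.2
  have s2 : Real.sqrt 2 ^ 2 = 2 := Real.sq_sqrt (by norm_num)
  have s1 : 1 ≤ Real.sqrt 2 := Real.one_le_sqrt.2 (by norm_num)
  have hε : 0 < 1 - α * (1 + Real.sqrt 2) := by nlinarith
  have hc : 0 < 2 * th - 1 := by linarith
  set V := lyap Φ th α x y lam θ with hV
  have hanti : ∀ s, (∀ z, Φ s ≤ Φ z) → Antitone (V s) := fun s hs =>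
    antitone_nat_of_succ_le fun n => by
      have := key s hs n
      have h2 : 0 ≤ (1 - α * (1 + Real.sqrt 2)) *
        (‖y (n + 1) - x (n + 1)‖ ^ 2 + ‖x (n + 2) - y (n + 1)‖ ^ 2) := by positivity
      linarith
  have hVge : ∀ s, (∀ z, Φ s ≤ Φ z) → ∀ n, ‖s - x (n + 1)‖ ^ 2 ≤ V s n := by
    intro s hs n
    have h1 : 0 ≤ Φ (x n) - Φ s := by linarith [hs (x n)]
    have h2 := hlampos n
    have h3 := hθpos' n
    have h4 : 0 ≤ (2 * th - 1) * α * ‖x (n + 1) - y n‖ ^ 2 := by positivity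
    have h5 : 0 ≤ 2 * lam n * (1 + th * θ n) * (Φ (x n) - Φ s) := by positivity
    simp only [hV, lyap]
    linarith
  obtain ⟨m, hm⟩ := hmin
  have hconv : ∃ L, Filter.Tendsto (V m) Filter.atTop (nhds L) :=
    ⟨_, tendsto_atTop_ciInf (hanti m hm)
      ⟨0, by rintro _ ⟨n, rfl⟩; exact le_trans (sq_nonneg _) (hVge m hm n)⟩⟩
  obtain ⟨L, hL⟩ := hconv
  have hdiff : Filter.Tendsto (fun n => (V m n - V m (n + 1)) / (1 - α * (1 + Real.sqrt 2)))
      Filter.atTop (nhds 0) := by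
    have := (hL.sub (hL.comp (Filter.tendsto_add_atTop_nat 1))).div_const
      (1 - α * (1 + Real.sqrt 2))
    simpa using this
  have hle : ∀ n, ‖y (n + 1) - x (n + 1)‖ ^ 2 + ‖x (n + 2) - y (n + 1)‖ ^ 2 ≤
      (V m n - V m (n + 1)) / (1 - α * (1 + Real.sqrt 2)) := by
    intro n
    rw [le_div_iff₀ hε]
    linarith [key m hm n]
  have sq_tend : ∀ w : ℕ → E, Filter.Tendsto (fun n => ‖w (n + 1)‖ ^ 2) Filter.atTop (nhds 0) →
      Filter.Tendsto w Filter.atTop (nhds 0) := by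
    intro w hw
    rw [← Filter.tendsto_add_atTop_iff_nat 1, tendsto_zero_iff_norm_tendsto_zero]
    have := hw.sqrt
    simpa [Real.sqrt_sq] using this
  have hyx : Filter.Tendsto (fun n => y n - x n) Filter.atTop (nhds 0) :=
    sq_tend _ (squeeze_zero (fun n => sq_nonneg _)
      (fun n => by have := hle n; nlinarith [sq_nonneg ‖x (n + 2) - y (n + 1)‖]) hdiff)
  have hxy : Filter.Tendsto (fun n => x (n + 1) - y n) Filter.atTop (nhds 0) :=
    sq_tend _ (squeeze_zero (fun n => sq_nonneg _)
      (fun n => by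
        have := hle n
        show ‖x (n + 2) - y (n + 1)‖ ^ 2 ≤ _
        nlinarith [sq_nonneg ‖y (n + 1) - x (n + 1)‖]) hdiff)
  obtain ⟨δ, hδ, hfreq⟩ := hlamF
  obtain ⟨φ, hφ, hφl⟩ := Filter.extraction_of_frequently_atTop hfreq
  have hball : ∀ k, x (φ k + 1) ∈ Metric.closedBall m (Real.sqrt (V m 0)) := by
    intro k
    rw [Metric.mem_closedBall, dist_comm, dist_eq_norm]
    exact Real.le_sqrt_of_sq_le ((hVge m hm _).trans (hanti m hm (Nat.zero_le _)))
  obtain ⟨xs, -, ψ, hψ, hlim⟩ := (isCompact_closedBall m (Real.sqrt (V m 0))).tendsto_subseq hball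
  have hμ : Filter.Tendsto (φ ∘ ψ) Filter.atTop Filter.atTop := (hφ.comp hψ).tendsto_atTop
  have hx1 : Filter.Tendsto (fun k => x (φ (ψ k) + 1)) Filter.atTop (nhds xs) := hlim
  have hyk : Filter.Tendsto (fun k => y (φ (ψ k))) Filter.atTop (nhds xs) := by
    simpa using hx1.sub (hxy.comp hμ)
  have hxk : Filter.Tendsto (fun k => x (φ (ψ k))) Filter.atTop (nhds xs) := by
    simpa using hyk.sub (hyx.comp hμ)
  have hgc : Continuous g := continuousOn_univ.1 (hg.continuousOn isOpen_univ)
  have hfc : Continuous f := continuousOn_univ.1 (hf.continuousOn isOpen_univ)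
  have hΦc : Continuous Φ := by
    rw [show Φ = fun z => f z + g z from funext hΦ]; exact hfc.add hgc
  have hxs : ∀ z, Φ xs ≤ Φ z := by
    intro z
    have hB : Filter.Tendsto (fun k => δ⁻¹ * (‖x (φ (ψ k) + 1) - x (φ (ψ k))‖ *
          ‖z - x (φ (ψ k) + 1)‖) + ⟪f' (y (φ (ψ k))), z - x (φ (ψ k) + 1)⟫)
        Filter.atTop (nhds (δ⁻¹ * (‖xs - xs‖ * ‖z - xs‖) + ⟪f' xs, z - xs⟫)) := by
      refine Filter.Tendsto.add ?_ ?_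
      · exact (((hx1.sub hxk).norm.mul (hx1.const_sub z).norm)).const_mul _
      · exact ((hf'lip.continuous.tendsto xs).comp hyk).inner (hx1.const_sub z)
    have hA : Filter.Tendsto (fun k => g (x (φ (ψ k) + 1)) - g z) Filter.atTop
        (nhds (g xs - g z)) := ((hgc.tendsto xs).comp hx1).sub_const _
    have hAB := le_of_tendsto_of_tendsto' hA hB (fun k => by
      have h1 := prox_ineq g hg _ (hlampos (φ (ψ k))) _ _ (hprox (φ (ψ k))) z
      have h2 := hφl (ψ k)
      set n := φ (ψ k)
      rw [show x (n + 1) - (x n - lam n • f' (y n)) = (x (n + 1) - x n) + lam n • f' (y n) by abel,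
        inner_add_left, real_inner_smul_left] at h1
      have h3 := real_inner_le_norm (x (n + 1) - x n) (z - x (n + 1))
      set N := ‖x (n + 1) - x n‖ * ‖z - x (n + 1)‖
      have hN : 0 ≤ N := by positivity
      have h4 : N ≤ lam n * (δ⁻¹ * N) := by
        have : δ * (δ⁻¹ * N) ≤ lam n * (δ⁻¹ * N) :=
          mul_le_mul_of_nonneg_right h2.le (by positivity)
        rwa [← mul_assoc, mul_inv_cancel₀ hδ.ne', one_mul] at this
      refine le_of_mul_le_mul_left ?_ (hlampos n)
      linarith)
    have hG := grad_ineq f hf _ _ (hf' xs) z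
    rw [sub_self, norm_zero, zero_mul, mul_zero, zero_add] at hAB
    rw [hΦ, hΦ]
    linarith
  -- the Lyapunov function at xs tends to zero along the subsequence
  have hb : Filter.Tendsto (fun k => V xs (φ (ψ k))) Filter.atTop (nhds 0) := by
    have hU : Filter.Tendsto (fun k => ‖xs - x (φ (ψ k) + 1)‖ ^ 2 +
        (2 * th - 1) * α * ‖x (φ (ψ k) + 1) - y (φ (ψ k))‖ ^ 2 +
        2 * lamMax * (1 + th * 2) * (Φ (x (φ (ψ k))) - Φ xs)) Filter.atTop
        (nhds (‖xs - xs‖ ^ 2 + (2 * th - 1) * α * ‖xs - xs‖ ^ 2 +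
          2 * lamMax * (1 + th * 2) * (Φ xs - Φ xs))) :=
      (((hx1.const_sub xs).norm.pow 2).add (((hx1.sub hyk).norm.pow 2).const_mul _)).add
        ((((hΦc.tendsto xs).comp hxk).sub_const _).const_mul _)
    simp only [sub_self, norm_zero, mul_zero, ne_eq, OfNat.ofNat_ne_zero, not_false_eq_true,
      zero_pow, add_zero] at hU
    refine squeeze_zero' (Filter.Eventually.of_forall fun k =>
      le_trans (sq_nonneg _) (hVge xs hxs _)) ?_ hU
    filter_upwards [hμ.eventually_ge_atTop 1] with k hk
    simp only [Function.comp] at hk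
    have h1 := hlammax _ hk
    have h2 := hθle _ hk
    have h3 : 0 ≤ Φ (x (φ (ψ k))) - Φ xs := by linarith [hxs (x (φ (ψ k)))]
    have h4 := hlampos (φ (ψ k))
    have h5 := hθpos' (φ (ψ k))
    simp only [hV, lyap]
    gcongr
  have hV0 : Filter.Tendsto (V xs) Filter.atTop (nhds 0) := by
    have h1 := tendsto_atTop_ciInf (hanti xs hxs)
      ⟨0, by rintro _ ⟨n, rfl⟩; exact le_trans (sq_nonneg _) (hVge xs hxs n)⟩
    have h2 := tendsto_nhds_unique (h1.comp hμ) hb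
    rwa [h2] at h1
  have hx : Filter.Tendsto x Filter.atTop (nhds xs) := by
    have h1 : Filter.Tendsto (fun n => xs - x n) Filter.atTop (nhds 0) :=
      sq_tend _ (squeeze_zero (fun n => sq_nonneg _) (hVge xs hxs) hV0)
    simpa using h1.const_sub xs
  refine ⟨xs, hxs, hx, ?_⟩
  simpa using hyx.add hx
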